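/- arXiv:2106.00500 — 2 statements merged into one kernel-verified Lean document; each statement's English description precedes it below -/
import Mathlib

section
/- The map r ↦ r·tanh(r) is a strictly increasing continuous bijection from [0,∞) onto [0,∞); consequently there is a unique function Φ : [0,∞) → (0,1] satisfying Φ(r·tanh(r)) = tanh(r)/r for all r > 0 and Φ(0) = 1. This function Φ is monotone decreasing and convex on [0,∞). -/
open Set Real

/-!
Along the parametrisation `x = r tanh r`, `Φ = tanh r / r`, write `t = tanh r` and `k = 1 - t²`,
which is the derivative of `t`. Then `Φ` has slope
`dΦ/dx = (r k - t) / (r² (t + r k))`, which is nonpositive, and the `r`-derivative of this slope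
is a positive multiple of `t² + r k t - 2 r² k = k (sinh² r + r tanh r - 2 r²)`. So convexity of `Φ`
amounts to `2 r² ≤ sinh² r + r tanh r`, which is the sum of the Taylor bounds
`r² + r⁴ / 3 ≤ sinh² r` and `r² - r⁴ / 3 ≤ r tanh r`.
-/

lemma antitoneOn_image_of_strictMonoOn {α β γ : Type*} [LinearOrder α] [Preorder β] [Preorder γ]
    {D : Set α} {g : α → β} {f : α → γ} {Φ : β → γ} (hg : StrictMonoOn g D)
    (hf : AntitoneOn f D) (hΦ : EqOn (Φ ∘ g) f D) : AntitoneOn Φ (g '' D) := by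
  rintro _ ⟨a, ha, rfl⟩ _ ⟨b, hb, rfl⟩ hab
  calc Φ (g b) = f b := hΦ hb
    _ ≤ f a := hf ha hb ((hg.le_iff_le ha hb).1 hab)
    _ = Φ (g a) := (hΦ ha).symm

section ParametrizedCurve

variable {D : Set ℝ} {g g' f m Φ : ℝ → ℝ}

lemma exists_slope_eq_of_hasDerivAt_mul {a b : ℝ} (hab : a < b)
    (hg : ContinuousOn g (Icc a b)) (hf : ContinuousOn f (Icc a b))
    (hgg' : ∀ r ∈ Ioo a b, HasDerivAt g (g' r) r) (hg'_pos : ∀ r ∈ Ioo a b, 0 < g' r)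
    (hff' : ∀ r ∈ Ioo a b, HasDerivAt f (m r * g' r) r) :
    ∃ c ∈ Ioo a b, (f b - f a) / (g b - g a) = m c := by
  obtain ⟨c, hc, hratio⟩ := exists_ratio_hasDerivAt_eq_ratio_slope f _ hab hf hff' g g' hg hgg'
  have hg_lt : g a < g b :=
    strictMonoOn_of_hasDerivWithinAt_pos (convex_Icc a b) hg
      (by simpa only [interior_Icc] using fun r hr ↦ (hgg' r hr).hasDerivWithinAt)
      (by simpa only [interior_Icc] using hg'_pos)
      (left_mem_Icc.2 hab.le) (right_mem_Icc.2 hab.le) hab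
  refine ⟨c, hc, (div_eq_iff (sub_pos.2 hg_lt).ne').2 (mul_right_cancel₀ (hg'_pos c hc).ne' ?_)⟩
  linear_combination -hratio

lemma convexOn_image_of_hasDerivAt_mul (hD : Convex ℝ D)
    (hg : ContinuousOn g D) (hf : ContinuousOn f D)
    (hgg' : ∀ r ∈ interior D, HasDerivAt g (g' r) r) (hg'_pos : ∀ r ∈ interior D, 0 < g' r)
    (hff' : ∀ r ∈ interior D, HasDerivAt f (m r * g' r) r) (hm : MonotoneOn m (interior D))
    (hΦ : EqOn (Φ ∘ g) f D) : ConvexOn ℝ (g '' D) Φ := by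
  have hg_mono : StrictMonoOn g D :=
    strictMonoOn_of_hasDerivWithinAt_pos hD hg (fun r hr ↦ (hgg' r hr).hasDerivWithinAt) hg'_pos
  have himage : Convex ℝ (g '' D) := (hD.isPreconnected.image g hg).ordConnected.convex
  have hslope : ∀ a ∈ D, ∀ b ∈ D, a < b →
      ∃ c ∈ Ioo a b, c ∈ interior D ∧ (Φ (g b) - Φ (g a)) / (g b - g a) = m c := by
    intro a ha b hb hab
    have hIcc : Icc a b ⊆ D := hD.ordConnected.out ha hb
    have hIoo : Ioo a b ⊆ interior D := interior_Icc (a := a) (b := b) ▸ interior_mono hIcc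
    obtain ⟨c, hc, hfc⟩ := exists_slope_eq_of_hasDerivAt_mul hab (hg.mono hIcc) (hf.mono hIcc)
      (fun r hr ↦ hgg' r (hIoo hr)) (fun r hr ↦ hg'_pos r (hIoo hr))
      (fun r hr ↦ hff' r (hIoo hr))
    exact ⟨c, hc, hIoo hc, by rw [← hfc, ← hΦ ha, ← hΦ hb]; rfl⟩
  refine convexOn_of_slope_mono_adjacent himage fun {x y z} hx hz hxy hyz ↦ ?_
  have hy : y ∈ g '' D := himage.ordConnected.out hx hz ⟨hxy.le, hyz.le⟩
  obtain ⟨a, ha, rfl⟩ := hx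
  obtain ⟨b, hb, rfl⟩ := hy
  obtain ⟨c, hc, rfl⟩ := hz
  obtain ⟨u, hu, huD, hu_eq⟩ := hslope a ha b hb ((hg_mono.lt_iff_lt ha hb).1 hxy)
  obtain ⟨v, hv, hvD, hv_eq⟩ := hslope b hb c hc ((hg_mono.lt_iff_lt hb hc).1 hyz)
  rw [hu_eq, hv_eq]
  exact hm huD hvD (hu.2.trans hv.1).le

end ParametrizedCurve

lemma le_of_hasDerivAt_le {f f' g g' : ℝ → ℝ} {a b : ℝ} (hab : a ≤ b)
    (hf : ∀ x ∈ Icc a b, HasDerivAt f (f' x) x) (hg : ∀ x ∈ Icc a b, HasDerivAt g (g' x) x)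
    (hle : ∀ x ∈ Ioo a b, f' x ≤ g' x) (ha : f a ≤ g a) : f b ≤ g b := by
  have hsub : ∀ x ∈ Icc a b, HasDerivAt (g - f) (g' x - f' x) x :=
    fun x hx ↦ (hg x hx).sub (hf x hx)
  have hmono : MonotoneOn (g - f) (Icc a b) :=
    monotoneOn_of_hasDerivWithinAt_nonneg (convex_Icc a b)
      (fun x hx ↦ (hsub x hx).continuousAt.continuousWithinAt)
      (fun x hx ↦ (hsub x (interior_subset hx)).hasDerivWithinAt)
      (by simpa only [interior_Icc, sub_nonneg] using hle)
  have hdiff : g a - f a ≤ g b - f b := hmono (left_mem_Icc.2 hab) (right_mem_Icc.2 hab) hab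
  linarith

lemma hasDerivAt_tanh (x : ℝ) : HasDerivAt tanh (1 - tanh x ^ 2) x := by
  have htanh : tanh = sinh / cosh := funext tanh_eq_sinh_div_cosh
  have hcosh := (cosh_pos x).ne'
  rw [htanh]
  refine ((hasDerivAt_sinh x).div (hasDerivAt_cosh x) hcosh).congr_deriv ?_
  simp only [Pi.div_apply]
  field_simp

lemma continuous_tanh : Continuous tanh :=
  continuous_iff_continuousAt.2 fun x ↦ (hasDerivAt_tanh x).continuousAt

lemma one_sub_tanh_sq_pos (x : ℝ) : 0 < 1 - tanh x ^ 2 :=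
  sub_pos.2 (tanh_sq_lt_one x)

lemma strictMono_tanh : StrictMono tanh :=
  strictMono_of_hasDerivAt_pos hasDerivAt_tanh one_sub_tanh_sq_pos

lemma tanh_pos {x : ℝ} (hx : 0 < x) : 0 < tanh x := by
  simpa only [tanh_zero] using strictMono_tanh hx

lemma sinh_sq_mul_one_sub_tanh_sq (x : ℝ) : sinh x ^ 2 * (1 - tanh x ^ 2) = tanh x ^ 2 := by
  have hcosh := (cosh_pos x).ne'
  rw [tanh_eq_sinh_div_cosh]
  field_simp
  linear_combination sinh x ^ 2 * cosh_sq x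

lemma tanh_le_self {x : ℝ} (hx : 0 ≤ x) : tanh x ≤ x :=
  le_of_hasDerivAt_le hx (fun y _ ↦ hasDerivAt_tanh y) (fun y _ ↦ hasDerivAt_id y)
    (fun y _ ↦ sub_le_self 1 (sq_nonneg (tanh y))) tanh_zero.le

lemma self_sub_cube_div_three_le_tanh {x : ℝ} (hx : 0 ≤ x) : x - x ^ 3 / 3 ≤ tanh x := by
  refine le_of_hasDerivAt_le (f := fun y ↦ y - y ^ 3 / 3) (f' := fun y ↦ 1 - y ^ 2) hx
    (fun y _ ↦ ?_) (fun y _ ↦ hasDerivAt_tanh y) (fun y hy ↦ ?_) (by simp)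
  · exact ((hasDerivAt_id y).sub ((hasDerivAt_pow 3 y).div_const 3)).congr_deriv (by norm_num)
  · have htanh : tanh y ^ 2 ≤ y ^ 2 :=
      pow_le_pow_left₀ (tanh_pos hy.1).le (tanh_le_self hy.1.le) 2
    linarith

lemma one_add_sq_div_two_le_cosh (x : ℝ) : 1 + x ^ 2 / 2 ≤ cosh x := by
  have hcosh : cosh x = 1 + 2 * sinh (x / 2) ^ 2 := by
    have h := cosh_two_mul (x / 2)
    rw [mul_div_cancel₀ x two_ne_zero, cosh_sq] at h
    linarith
  have hsinh : (x / 2) ^ 2 ≤ sinh (x / 2) ^ 2 := by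
    rw [sq_le_sq, abs_sinh]
    exact self_le_sinh_iff.2 (abs_nonneg _)
  linarith

lemma self_add_cube_div_six_le_sinh {x : ℝ} (hx : 0 ≤ x) : x + x ^ 3 / 6 ≤ sinh x := by
  refine le_of_hasDerivAt_le (f := fun y ↦ y + y ^ 3 / 6) (f' := fun y ↦ 1 + y ^ 2 / 2) hx
    (fun y _ ↦ ?_) (fun y _ ↦ hasDerivAt_sinh y) (fun y _ ↦ one_add_sq_div_two_le_cosh y) (by simp)
  refine ((hasDerivAt_id y).add ((hasDerivAt_pow 3 y).div_const 6)).congr_deriv ?_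
  norm_num
  ring

lemma two_mul_sq_le_sinh_sq_add_mul_tanh (x : ℝ) : 2 * x ^ 2 ≤ sinh x ^ 2 + x * tanh x := by
  wlog hx : 0 ≤ x generalizing x
  · simpa using this (-x) (by linarith)
  have hsinh : x ^ 2 + x ^ 4 / 3 ≤ sinh x ^ 2 :=
    calc x ^ 2 + x ^ 4 / 3 ≤ (x + x ^ 3 / 6) ^ 2 := by nlinarith [sq_nonneg (x ^ 3)]
      _ ≤ sinh x ^ 2 := pow_le_pow_left₀ (by positivity) (self_add_cube_div_six_le_sinh hx) 2
  have htanh : x ^ 2 - x ^ 4 / 3 ≤ x * tanh x :=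
    calc x ^ 2 - x ^ 4 / 3 = x * (x - x ^ 3 / 3) := by ring
      _ ≤ x * tanh x := mul_le_mul_of_nonneg_left (self_sub_cube_div_three_le_tanh hx) hx
  linarith

lemma hasDerivAt_mul_one_sub_tanh_sq (x : ℝ) :
    HasDerivAt (fun y ↦ y * (1 - tanh y ^ 2))
      (1 - tanh x ^ 2 - 2 * x * tanh x * (1 - tanh x ^ 2)) x := by
  refine ((hasDerivAt_id x).mul (((hasDerivAt_tanh x).pow 2).const_sub 1)).congr_deriv ?_
  simp only [id, Pi.pow_apply]
  ring

lemma mul_one_sub_tanh_sq_le_tanh {x : ℝ} (hx : 0 ≤ x) : x * (1 - tanh x ^ 2) ≤ tanh x := by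
  refine le_of_hasDerivAt_le hx (fun y _ ↦ hasDerivAt_mul_one_sub_tanh_sq y)
    (fun y _ ↦ hasDerivAt_tanh y) (fun y hy ↦ sub_le_self _ ?_) (by simp)
  have hy_pos : 0 < y := hy.1
  have htanh := tanh_pos hy_pos
  have hk := one_sub_tanh_sq_pos y
  positivity

lemma hasDerivAt_mul_tanh (r : ℝ) :
    HasDerivAt (fun r ↦ r * tanh r) (tanh r + r * (1 - tanh r ^ 2)) r :=
  ((hasDerivAt_id r).mul (hasDerivAt_tanh r)).congr_deriv (by rw [one_mul, id])

lemma continuous_mul_tanh : Continuous fun r : ℝ ↦ r * tanh r :=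
  continuous_id.mul continuous_tanh

lemma deriv_mul_tanh_pos {r : ℝ} (hr : 0 < r) : 0 < tanh r + r * (1 - tanh r ^ 2) :=
  add_pos (tanh_pos hr) (mul_pos hr (one_sub_tanh_sq_pos r))

lemma strictMonoOn_mul_tanh : StrictMonoOn (fun r : ℝ ↦ r * tanh r) (Ici 0) :=
  strictMonoOn_of_hasDerivWithinAt_pos (convex_Ici 0) continuous_mul_tanh.continuousOn
    (fun r _ ↦ (hasDerivAt_mul_tanh r).hasDerivWithinAt)
    (by rw [interior_Ici]; exact fun r hr ↦ deriv_mul_tanh_pos hr)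

lemma tendsto_mul_tanh_atTop :
    Filter.Tendsto (fun r : ℝ ↦ r * tanh r) Filter.atTop Filter.atTop := by
  refine Filter.tendsto_atTop_mono' _ ?_ (Filter.tendsto_id.atTop_mul_const (tanh_pos one_pos))
  filter_upwards [Filter.eventually_ge_atTop 1] with r hr
  exact mul_le_mul_of_nonneg_left (strictMono_tanh.monotone hr) (zero_le_one.trans hr)

lemma bijOn_mul_tanh : BijOn (fun r : ℝ ↦ r * tanh r) (Ici 0) (Ici 0) := by
  refine ⟨fun r hr ↦ ?_, strictMonoOn_mul_tanh.injOn, ?_⟩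
  · simpa using strictMonoOn_mul_tanh.monotoneOn self_mem_Ici hr hr
  · simpa only [zero_mul, SurjOn] using
      intermediate_value_Ici (a := 0) continuous_mul_tanh.continuousOn tendsto_mul_tanh_atTop

/-- The function `tanh r / r`, continuously extended by the value `1` at `r = 0`. -/
noncomputable def tanhc : ℝ → ℝ := dslope tanh 0

lemma tanhc_zero : tanhc 0 = 1 := by
  simp [tanhc, dslope_same, (hasDerivAt_tanh 0).deriv]

lemma tanhc_of_ne_zero {r : ℝ} (hr : r ≠ 0) : tanhc r = tanh r / r := by
  simp [tanhc, dslope_of_ne _ hr, slope_def_field]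

lemma continuous_tanhc : Continuous tanhc := by
  refine continuous_iff_continuousAt.2 fun r ↦ ?_
  rcases eq_or_ne r 0 with rfl | hr
  · exact continuousAt_dslope_same.2 (hasDerivAt_tanh 0).differentiableAt
  · exact (continuousAt_dslope_of_ne hr).2 continuous_tanh.continuousAt

lemma hasDerivAt_tanhc {r : ℝ} (hr : r ≠ 0) :
    HasDerivAt tanhc ((r * (1 - tanh r ^ 2) - tanh r) / r ^ 2) r := by
  have heq : tanhc =ᶠ[nhds r] fun s ↦ tanh s / s := by
    filter_upwards [isOpen_ne.mem_nhds hr] with s hs using tanhc_of_ne_zero hs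
  refine (((hasDerivAt_tanh r).div (hasDerivAt_id r) hr).congr_of_eventuallyEq heq).congr_deriv ?_
  simp [mul_comm]

lemma antitoneOn_tanhc : AntitoneOn tanhc (Ici 0) := by
  refine antitoneOn_of_hasDerivWithinAt_nonpos (convex_Ici 0) continuous_tanhc.continuousOn
    (f' := fun r ↦ (r * (1 - tanh r ^ 2) - tanh r) / r ^ 2) ?_ ?_ <;>
    simp only [interior_Ici, mem_Ioi]
  · exact fun r hr ↦ (hasDerivAt_tanhc hr.ne').hasDerivWithinAt
  · exact fun r hr ↦ div_nonpos_of_nonpos_of_nonneg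
      (sub_nonpos.2 (mul_one_sub_tanh_sq_le_tanh hr.le)) (sq_nonneg r)

lemma tanhc_mem_Ioc {r : ℝ} (hr : 0 ≤ r) : tanhc r ∈ Ioc 0 1 := by
  refine ⟨?_, tanhc_zero ▸ antitoneOn_tanhc self_mem_Ici hr hr⟩
  rcases hr.eq_or_lt with rfl | hr
  · exact tanhc_zero ▸ one_pos
  · exact tanhc_of_ne_zero hr.ne' ▸ div_pos (tanh_pos hr) hr

/-- The slope at parameter `r` of the curve `r ↦ (r * tanh r, tanhc r)`, as the quotient of the
derivatives of its coordinates; it has this meaning only for `r ≠ 0`. -/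
noncomputable def tanhcSlope (r : ℝ) : ℝ :=
  (r * (1 - tanh r ^ 2) - tanh r) / (r ^ 2 * (tanh r + r * (1 - tanh r ^ 2)))

lemma hasDerivAt_tanhc_eq_tanhcSlope_mul {r : ℝ} (hr : 0 < r) :
    HasDerivAt tanhc (tanhcSlope r * (tanh r + r * (1 - tanh r ^ 2))) r := by
  refine (hasDerivAt_tanhc hr.ne').congr_deriv ?_
  have hpos := (deriv_mul_tanh_pos hr).ne'
  rw [tanhcSlope, div_mul_eq_mul_div, mul_div_mul_right _ _ hpos]

lemma hasDerivAt_tanhcSlope {r : ℝ} (hr : 0 < r) :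
    HasDerivAt tanhcSlope
      (2 * r * (1 - tanh r ^ 2) * (sinh r ^ 2 + r * tanh r - 2 * r ^ 2) /
        (r ^ 2 * (tanh r + r * (1 - tanh r ^ 2))) ^ 2) r := by
  have hk := hasDerivAt_mul_one_sub_tanh_sq r
  have hden : r ^ 2 * (tanh r + r * (1 - tanh r ^ 2)) ≠ 0 :=
    (mul_pos (pow_pos hr 2) (deriv_mul_tanh_pos hr)).ne'
  refine ((hk.sub (hasDerivAt_tanh r)).div
    ((hasDerivAt_pow 2 r).mul ((hasDerivAt_tanh r).add hk)) hden).congr_deriv ?_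
  congr 1
  simp only [Pi.add_apply, Pi.mul_apply, Pi.sub_apply]
  linear_combination -2 * r * sinh_sq_mul_one_sub_tanh_sq r

lemma monotoneOn_tanhcSlope : MonotoneOn tanhcSlope (Ioi 0) := by
  refine monotoneOn_of_hasDerivWithinAt_nonneg (convex_Ioi 0)
    (fun r hr ↦ (hasDerivAt_tanhcSlope hr).continuousAt.continuousWithinAt)
    (fun r hr ↦ (hasDerivAt_tanhcSlope (interior_subset hr)).hasDerivWithinAt) fun r hr ↦ ?_
  have hr : 0 < r := interior_subset hr
  have hk := one_sub_tanh_sq_pos r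
  have hkey := sub_nonneg.2 (two_mul_sq_le_sinh_sq_add_mul_tanh r)
  positivity

/-- The function `Φ` of the theorem: its value at `r * tanh r` is `tanhc r`. The inverse of
`r ↦ r * tanh r` is taken on `[0, ∞)`, so negative arguments give junk values. -/
noncomputable def tanhcOfMulTanh (x : ℝ) : ℝ :=
  tanhc (Function.invFunOn (fun r : ℝ ↦ r * tanh r) (Ici 0) x)

lemma tanhcOfMulTanh_mul_tanh {r : ℝ} (hr : 0 ≤ r) : tanhcOfMulTanh (r * tanh r) = tanhc r :=
  congrArg tanhc (strictMonoOn_mul_tanh.injOn.leftInvOn_invFunOn hr)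

lemma antitoneOn_tanhcOfMulTanh : AntitoneOn tanhcOfMulTanh (Ici 0) :=
  bijOn_mul_tanh.image_eq ▸ antitoneOn_image_of_strictMonoOn strictMonoOn_mul_tanh
    antitoneOn_tanhc fun _ ↦ tanhcOfMulTanh_mul_tanh

lemma convexOn_tanhcOfMulTanh : ConvexOn ℝ (Ici 0) tanhcOfMulTanh := by
  rw [← bijOn_mul_tanh.image_eq]
  refine convexOn_image_of_hasDerivAt_mul (m := tanhcSlope) (convex_Ici 0)
    continuous_mul_tanh.continuousOn continuous_tanhc.continuousOn
    (fun r _ ↦ hasDerivAt_mul_tanh r) ?_ ?_ ?_ fun _ ↦ tanhcOfMulTanh_mul_tanh <;>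
    rw [interior_Ici]
  exacts [fun _ ↦ deriv_mul_tanh_pos, fun _ ↦ hasDerivAt_tanhc_eq_tanhcSlope_mul,
    monotoneOn_tanhcSlope]

theorem stmt5 :
    StrictMonoOn (fun r : ℝ => r * Real.tanh r) (Set.Ici 0) ∧
    ContinuousOn (fun r : ℝ => r * Real.tanh r) (Set.Ici 0) ∧
    Set.BijOn (fun r : ℝ => r * Real.tanh r) (Set.Ici 0) (Set.Ici 0) ∧
    ∃ Φ : ℝ → ℝ,
      ((∀ r : ℝ, 0 < r → Φ (r * Real.tanh r) = Real.tanh r / r) ∧ Φ 0 = 1) ∧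
      (∀ x ∈ Set.Ici (0 : ℝ), Φ x ∈ Set.Ioc (0 : ℝ) 1) ∧
      AntitoneOn Φ (Set.Ici 0) ∧
      ConvexOn ℝ (Set.Ici 0) Φ ∧
      (∀ Ψ : ℝ → ℝ,
        ((∀ r : ℝ, 0 < r → Ψ (r * Real.tanh r) = Real.tanh r / r) ∧ Ψ 0 = 1) →
        Set.EqOn Ψ Φ (Set.Ici 0)) := by
  have hpos : ∀ r : ℝ, 0 < r → tanhcOfMulTanh (r * tanh r) = tanh r / r := fun r hr ↦ by
    rw [tanhcOfMulTanh_mul_tanh hr.le, tanhc_of_ne_zero hr.ne']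
  have hzero : tanhcOfMulTanh 0 = 1 := by
    simpa [tanhc_zero] using tanhcOfMulTanh_mul_tanh le_rfl
  refine ⟨strictMonoOn_mul_tanh, continuous_mul_tanh.continuousOn, bijOn_mul_tanh, tanhcOfMulTanh,
    ⟨hpos, hzero⟩, fun x hx ↦ ?_, antitoneOn_tanhcOfMulTanh, convexOn_tanhcOfMulTanh, ?_⟩
  · obtain ⟨r, hr, rfl⟩ := bijOn_mul_tanh.surjOn hx
    exact tanhcOfMulTanh_mul_tanh hr ▸ tanhc_mem_Ioc hr
  · rintro Ψ ⟨hΨpos, hΨzero⟩ x hx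
    obtain ⟨r, hr, rfl⟩ := bijOn_mul_tanh.surjOn hx
    rcases (mem_Ici.1 hr).eq_or_lt with rfl | hr
    · simp [hΨzero, hzero]
    · exact (hΨpos r hr).trans (hpos r hr).symm
end

section
/- The function Φ : [0,∞) → (0,1] defined implicitly by Φ(r·tanh(r)) = tanh(r)/r for r > 0 and Φ(0) = 1 satisfies, for every t > 0, the lower bounds Φ(t) ≥ (1 − e^{−t})/t ≥ max{0, 1 − t/2}. -/
/-!
Put `x = tanh r` and `t = r * tanh r = x * artanh x`. The first inequality becomes
`1 - x ^ 2 ≤ exp (-(x * artanh x))`, that is `x * artanh x ≤ -log (1 - x ^ 2)`, and this holds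
termwise for the power series `∑ x ^ (2 * k + 2) / (2 * k + 1)` and `∑ x ^ (2 * k + 2) / (k + 1)`.
Every `t > 0` has the form `r * tanh r` by the intermediate value theorem.
-/

open Filter Set Topology

theorem hasSum_artanh {x : ℝ} (hx : |x| < 1) :
    HasSum (fun k : ℕ ↦ x ^ (2 * k + 1) / (2 * k + 1)) (Real.artanh x) := by
  obtain ⟨hx_neg, hx_one⟩ := abs_lt.1 hx
  rw [Real.artanh_eq_half_log ⟨hx_neg.le, hx_one.le⟩, Real.log_div (by linarith) (by linarith)]
  refine ((Real.hasSum_log_sub_log_of_abs_lt_one hx).mul_left (1 / 2)).congr_fun fun k ↦ ?_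
  ring

theorem mul_artanh_le_neg_log_one_sub_sq {x : ℝ} (hx : |x| < 1) :
    x * Real.artanh x ≤ -Real.log (1 - x ^ 2) := by
  have hx_sq : |x ^ 2| < 1 := by rwa [abs_sq, sq_lt_one_iff_abs_lt_one]
  refine hasSum_le (fun k ↦ ?_) ((hasSum_artanh hx).mul_left x)
    (Real.hasSum_pow_div_log_of_abs_lt_one hx_sq)
  calc x * (x ^ (2 * k + 1) / (2 * k + 1))
      = (x ^ 2) ^ (k + 1) / (2 * k + 1) := by ring
    _ ≤ (x ^ 2) ^ (k + 1) / (k + 1) := by gcongr; linarith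

theorem one_sub_tanh_sq_le_exp (r : ℝ) :
    1 - Real.tanh r ^ 2 ≤ Real.exp (-(r * Real.tanh r)) := by
  have h_log := mul_artanh_le_neg_log_one_sub_sq (Real.abs_tanh_lt_one r)
  rw [Real.artanh_tanh] at h_log
  rw [← Real.log_le_iff_le_exp (sub_pos.2 (Real.tanh_sq_lt_one r))]
  linarith

theorem tanh_pos_s6 {r : ℝ} (hr : 0 < r) : 0 < Real.tanh r := by
  rw [Real.tanh_eq_sinh_div_cosh]
  exact div_pos (Real.sinh_pos_iff.2 hr) (Real.cosh_pos r)

theorem one_sub_exp_neg_div_le_tanh_div {r : ℝ} (hr : 0 < r) :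
    (1 - Real.exp (-(r * Real.tanh r))) / (r * Real.tanh r) ≤ Real.tanh r / r := by
  have h_tanh := tanh_pos_s6 hr
  calc (1 - Real.exp (-(r * Real.tanh r))) / (r * Real.tanh r)
      ≤ Real.tanh r ^ 2 / (r * Real.tanh r) := by
        gcongr
        linarith [one_sub_tanh_sq_le_exp r]
    _ = Real.tanh r / r := by field_simp

theorem continuous_tanh_s6 : Continuous Real.tanh := by
  simp only [funext Real.tanh_eq_sinh_div_cosh]
  exact Real.continuous_sinh.div Real.continuous_cosh fun r ↦ (Real.cosh_pos r).ne'

theorem tanh_eq_one_sub_two_div (r : ℝ) :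
    Real.tanh r = 1 - 2 / (Real.exp (2 * r) + 1) := by
  have h_exp : Real.exp (2 * r) = Real.exp r ^ 2 := by rw [← Real.exp_nat_mul]; norm_cast
  rw [Real.tanh_eq, Real.exp_neg, h_exp]
  field_simp
  ring

theorem tendsto_tanh_atTop : Tendsto Real.tanh atTop (𝓝 1) := by
  have h_denom : Tendsto (fun r : ℝ ↦ Real.exp (2 * r) + 1) atTop atTop :=
    tendsto_atTop_add_const_right _ _
      (Real.tendsto_exp_atTop.comp (tendsto_id.const_mul_atTop two_pos))
  simpa only [funext tanh_eq_one_sub_two_div, sub_zero] using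
    (h_denom.const_div_atTop 2).const_sub 1

theorem surjOn_mul_tanh : SurjOn (fun r : ℝ ↦ r * Real.tanh r) (Ioi 0) (Ioi 0) := by
  have h_cont : Continuous (fun r : ℝ ↦ r * Real.tanh r) := continuous_id.mul continuous_tanh_s6
  have h_top : Tendsto (fun r : ℝ ↦ r * Real.tanh r) atTop atTop :=
    tendsto_id.atTop_mul_pos one_pos tendsto_tanh_atTop
  simpa only [SurjOn, zero_mul] using
    intermediate_value_Ioi (a := 0) h_cont.continuousOn h_top

theorem exp_neg_le_quadratic {t : ℝ} (ht : 0 ≤ t) : Real.exp (-t) ≤ 1 - t + t ^ 2 / 2 := by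
  have h_pos : 0 < 1 - t + t ^ 2 / 2 := by nlinarith [sq_nonneg (t - 1)]
  rw [Real.exp_neg, inv_le_iff_one_le_mul₀ (Real.exp_pos t)]
  calc 1 ≤ 1 + t ^ 4 / 4 := le_add_of_nonneg_right (by positivity)
    _ = (1 - t + t ^ 2 / 2) * (1 + t + t ^ 2 / 2) := by ring
    _ ≤ (1 - t + t ^ 2 / 2) * Real.exp t := by
      gcongr
      exact Real.quadratic_le_exp_of_nonneg ht

theorem max_le_one_sub_exp_neg_div {t : ℝ} (ht : 0 < t) :
    max 0 (1 - t / 2) ≤ (1 - Real.exp (-t)) / t := by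
  apply max_le
  · have h_exp : Real.exp (-t) ≤ 1 := Real.exp_le_one_iff.2 (by linarith)
    exact div_nonneg (sub_nonneg.2 h_exp) ht.le
  · rw [le_div_iff₀ ht]
    linarith [exp_neg_le_quadratic ht.le]

theorem stmt6 (Φ : ℝ → ℝ)
    (hΦ : ∀ r : ℝ, 0 < r → Φ (r * Real.tanh r) = Real.tanh r / r)
    (hΦ0 : Φ 0 = 1) :
    ∀ t : ℝ, 0 < t →
      Φ t ≥ (1 - Real.exp (-t)) / t ∧
      (1 - Real.exp (-t)) / t ≥ max 0 (1 - t / 2) := by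
  intro t ht
  refine ⟨?_, max_le_one_sub_exp_neg_div ht⟩
  obtain ⟨r, hr, rfl⟩ := surjOn_mul_tanh ht
  calc Φ (r * Real.tanh r) = Real.tanh r / r := hΦ r hr
    _ ≥ _ := one_sub_exp_neg_div_le_tanh_div hr
end
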